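/- arXiv:1602.02451 — 3 statements merged into one kernel-verified Lean document; each statement's English description precedes it below -/
import Mathlib

section
/- Let T_s > 0 be finite and let φ ∈ C¹(ℝ⁺ × [0,T_s)) be a solution of the flow-map equation with admissible data (φ₀, g) such that φ₀ ≡ ε₀ is a positive constant, g' ≤ 0 on ℝ⁺, and inf_{(x,t) ∈ ℝ⁺×[0,T']} φ(x,t) > 0 for every T' < T_s. Let x₀ > 0 be such that lim_{t→T_s} Φ(x₀,t) > 0. Then for every x ≥ x₀ the pointwise limit φ(x,T_s) := lim_{t→T_s} φ(x,t) exists, the function x ↦ φ(x,T_s) is continuously differentiable on [x₀,∞), and φ(·,t) converges to φ(·,T_s) in the C¹ norm on [x₀,∞) as t → T_s. -/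
/-!
Since `g' ≤ 0` and `Φ ≥ 0`, the rate `a(x,t) = ∫_x^∞ g'(z)/Φ(z,t) dz` is nonpositive, so `φ(x,·)`
and `Φ(x,·)` are nonincreasing. Hence `Φ(x₀,t) ≥ L > 0`, and as `φ ≤ ε₀` and `Φ(·,t)` is
nondecreasing, `Φ(z,t) ≥ L/2` for all `z` beyond some `x₁ < x₀` and all `t < T_s`
(`exists_Phi_lower_bound`). On `(x₁,∞)` both `a` and `∂ₓ a = -g'/Φ` are therefore bounded
uniformly in `t < T_s`; both are also monotone in time, which supplies their measurability.

Integrating the equation, `φ(x,t) = ε₀ exp (∫₀ᵗ a(x,s) ds)` (`phi_eq_exp`). The right-hand side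
makes sense at `t = T_s` and can be differentiated in `x` under the time integral. It and its
`x`-derivative change by at most a constant times `T_s - t` between `t` and `T_s`, uniformly in
`x`, which is `C¹` convergence (`core`).
-/
open Set MeasureTheory Filter Topology

noncomputable def gD (g : ℝ → ℝ) (z : ℝ) : ℝ := derivWithin g (Set.Ici 0) z

noncomputable def Phi (φ : ℝ → ℝ → ℝ) (z t : ℝ) : ℝ := ∫ σ in (0:ℝ)..z, φ σ t

/-- Admissible data for the flow-map equation: `φ₀ ∈ C¹(ℝ⁺)`, `g ∈ C²(ℝ⁺)` with
compact support in `ℝ⁺`, `inf φ₀ > 0` and `g'(0) = 0`. -/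
def AdmissibleData (φ₀ g : ℝ → ℝ) : Prop :=
  ContDiffOn ℝ 1 φ₀ (Set.Ici 0) ∧
  ContDiffOn ℝ 2 g (Set.Ici 0) ∧
  (∃ a : ℝ, ∀ z ≥ a, g z = 0) ∧
  (∃ m : ℝ, 0 < m ∧ ∀ x ≥ (0:ℝ), m ≤ φ₀ x) ∧
  gD g 0 = 0

/-- `φ` is a `C¹(ℝ⁺ × I)` solution of the flow-map equation
`∂ₜφ(x,t) = φ(x,t) ∫_x^∞ g'(z)/Φ(z,t) dz`, `φ(x,0) = φ₀(x)`. -/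
def IsFlowMapSolution (φ₀ g : ℝ → ℝ) (φ : ℝ → ℝ → ℝ) (I : Set ℝ) : Prop :=
  ContDiffOn ℝ 1 (fun p : ℝ × ℝ => φ p.1 p.2) (Set.Ici 0 ×ˢ I) ∧
  (∀ x ≥ (0:ℝ), φ x 0 = φ₀ x) ∧
  (∀ x ≥ (0:ℝ), ∀ t ∈ I,
    HasDerivWithinAt (fun s => φ x s)
      (φ x t * ∫ z in Set.Ioi x, gD g z / Phi φ z t) I t)

/-- `inf_{(x,t) ∈ ℝ⁺ × I} φ(x,t) > 0`. -/
def PosInfOn (φ : ℝ → ℝ → ℝ) (I : Set ℝ) : Prop :=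
  ∃ m : ℝ, 0 < m ∧ ∀ x ≥ (0:ℝ), ∀ t ∈ I, m ≤ φ x t


/-! ### Time integrals of bounded monotone integrands -/

lemma integrableOn_of_antitone_bdd {T M : ℝ} {f : ℝ → ℝ} (hf : AntitoneOn f (Ico 0 T))
    (hM : ∀ s ∈ Ico 0 T, |f s| ≤ M) {t : ℝ} (ht : t ≤ T) : IntegrableOn f (Ioo 0 t) := by
  have hsub : Ioo 0 t ⊆ Ico 0 T := fun s hs => ⟨hs.1.le, hs.2.trans_le ht⟩
  refine IntegrableOn.of_bound (by simp) ?_ M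
    (ae_restrict_of_forall_mem measurableSet_Ioo fun s hs => hM s (hsub hs))
  exact (aemeasurable_restrict_of_antitoneOn measurableSet_Ioo
    (hf.mono hsub)).aestronglyMeasurable

lemma abs_integral_le_of_bdd {T M : ℝ} {f : ℝ → ℝ} (hT : 0 < T)
    (hM : ∀ s ∈ Ico 0 T, |f s| ≤ M) : |∫ s in Ioo 0 T, f s| ≤ M * T := by
  have := norm_setIntegral_le_of_norm_le_const (μ := volume) (s := Ioo 0 T) (f := f) (C := M)
    (by simp) (fun s hs => hM s ⟨hs.1.le, hs.2⟩)
  simpa [Measure.real, hT.le] using this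

lemma abs_integral_sub_le {T M : ℝ} {f : ℝ → ℝ} (hf : AntitoneOn f (Ico 0 T))
    (hM : ∀ s ∈ Ico 0 T, |f s| ≤ M) {t : ℝ} (ht : t ∈ Ioo 0 T) :
    |(∫ s in Ioo 0 T, f s) - ∫ s in Ioo 0 t, f s| ≤ M * (T - t) := by
  have hu : Ioo 0 t ∪ Ico t T = Ioo 0 T := Ioo_union_Ico_eq_Ioo ht.1 ht.2.le
  have hi := integrableOn_of_antitone_bdd hf hM le_rfl
  have hI := setIntegral_union (f := f) (μ := volume) (s := Ioo 0 t) (t := Ico t T)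
    (Set.disjoint_left.2 fun s h1 h2 => (h1.2.trans_le h2.1).false) measurableSet_Ico
    (hi.mono_set (hu ▸ subset_union_left)) (hi.mono_set (hu ▸ subset_union_right))
  rw [hu] at hI
  rw [hI, add_sub_cancel_left]
  have := norm_setIntegral_le_of_norm_le_const (μ := volume) (s := Ico t T) (f := f) (C := M)
    (by simp) (fun s hs => hM s ⟨ht.1.le.trans hs.1, hs.2⟩)
  simpa [Measure.real, ht.2.le] using this

lemma abs_exp_sub_exp_le {u v : ℝ} (hu : u ≤ 0) (hv : v ≤ 0) :
    |Real.exp u - Real.exp v| ≤ |u - v| := by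
  wlog h : v ≤ u generalizing u v
  · rw [abs_sub_comm, abs_sub_comm u v]
    exact this hv hu (le_of_not_ge h)
  rw [abs_of_nonneg (sub_nonneg.2 (Real.exp_le_exp.2 h)), abs_of_nonneg (sub_nonneg.2 h)]
  have h1 : Real.exp v = Real.exp u * Real.exp (v - u) := by rw [← Real.exp_add]; ring_nf
  have h2 := Real.add_one_le_exp (v - u)
  have h3 : Real.exp u ≤ 1 := Real.exp_le_one_iff.2 hu
  have h4 := Real.exp_pos u
  rw [h1]
  nlinarith

/-- A family of functions that approaches its candidate limit at rate `D * (T - t)` converges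
uniformly as `t` increases to `T`. -/
lemma tendstoUniformlyOn_of_rate {T D : ℝ} (hT : 0 < T) {F : ℝ → ℝ → ℝ} {G : ℝ → ℝ} {S : Set ℝ}
    (h : ∀ t ∈ Ioo 0 T, ∀ x ∈ S, |G x - F t x| ≤ D * (T - t)) :
    TendstoUniformlyOn F G (𝓝[<] T) S := by
  rw [Metric.tendstoUniformlyOn_iff]
  intro ε hε
  have hl : Tendsto (fun t => D * (T - t)) (𝓝[<] T) (𝓝 0) := by
    have : Tendsto (fun t => D * (T - t)) (𝓝 T) (𝓝 (D * (T - T))) :=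
      Continuous.tendsto (by fun_prop) T
    simpa using this.mono_left nhdsWithin_le_nhds
  filter_upwards [hl.eventually_lt_const hε, Ioo_mem_nhdsLT hT] with t h1 h2 x hx
  exact (h t h2 x hx).trans_lt h1

/-! ### Convergence for the exponential representation -/

/-- The analytic core: if `φ(x,t) = ε exp (∫₀ᵗ a(x,s) ds)` with a nonpositive bounded rate `a`
whose `x`-derivative `-f` is bounded and continuous in `x`, with `a` and `f` nonincreasing in time,
all this on `(x₁,∞)` with `x₁ < x₀` and with bounds uniform for `t < T`, then the formula makes
sense at `t = T` and gives the `C¹` limit on `[x₀,∞)`. -/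
lemma core {T x₁ x₀ M D ε : ℝ} {a f φ : ℝ → ℝ → ℝ} (hT : 0 < T) (hx : x₁ < x₀) (hε : 0 < ε)
    (ha : ∀ x > x₁, AntitoneOn (a x) (Ico 0 T)) (hf : ∀ x > x₁, AntitoneOn (f x) (Ico 0 T))
    (haM : ∀ x > x₁, ∀ s ∈ Ico 0 T, |a x s| ≤ M) (hfD : ∀ x > x₁, ∀ s ∈ Ico 0 T, |f x s| ≤ D)
    (ha0 : ∀ x > x₁, ∀ s ∈ Ico 0 T, a x s ≤ 0)
    (hder : ∀ x > x₁, ∀ s ∈ Ico 0 T, HasDerivAt (fun y => a y s) (-(f x s)) x)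
    (hfc : ∀ s ∈ Ico 0 T, ContinuousOn (fun y => f y s) (Ioi x₁))
    (hφ : ∀ x > x₁, ∀ t ∈ Ioo 0 T, φ x t = ε * Real.exp (∫ s in Ioo 0 t, a x s)) :
    ∃ φs : ℝ → ℝ,
      (∀ x ≥ x₀, Tendsto (fun t => φ x t) (𝓝[<] T) (𝓝 (φs x))) ∧
      ContDiffOn ℝ 1 φs (Set.Ici x₀) ∧
      TendstoUniformlyOn (fun t x => φ x t) φs (𝓝[<] T) (Set.Ici x₀) ∧
      TendstoUniformlyOn (fun t x => derivWithin (fun w => φ w t) (Set.Ici x₀) x)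
        (fun x => derivWithin φs (Set.Ici x₀) x) (𝓝[<] T) (Set.Ici x₀) := by
  set A : ℝ → ℝ → ℝ := fun x t => ∫ s in Ioo 0 t, a x s with hA
  set B : ℝ → ℝ → ℝ := fun x t => ∫ s in Ioo 0 t, f x s with hB
  have hM0 : 0 ≤ M := (abs_nonneg _).trans (haM x₀ hx 0 ⟨le_rfl, hT⟩)
  have hD0 : 0 ≤ D := (abs_nonneg _).trans (hfD x₀ hx 0 ⟨le_rfl, hT⟩)
  have hA0 : ∀ x > x₁, ∀ t ≤ T, A x t ≤ 0 := fun x hx t ht =>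
    setIntegral_nonpos measurableSet_Ioo fun s hs => ha0 x hx s ⟨hs.1.le, hs.2.trans_le ht⟩
  have hdA : ∀ t ≤ T, ∀ x > x₁, HasDerivAt (fun y => A y t) (-B x t) x := by
    intro t ht x hx
    have hmem : ∀ s ∈ Ioo 0 t, s ∈ Ico 0 T := fun s hs => ⟨hs.1.le, hs.2.trans_le ht⟩
    have := (hasDerivAt_integral_of_dominated_loc_of_deriv_le (μ := volume.restrict (Ioo 0 t))
      (F := a) (F' := fun y s => -(f y s)) (bound := fun _ => D) (x₀ := x) (s := Ioi x₁)
      (Ioi_mem_nhds hx) ?_ (integrableOn_of_antitone_bdd (ha x hx) (haM x hx) ht)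
      (integrableOn_of_antitone_bdd (hf x hx) (hfD x hx) ht).aestronglyMeasurable.neg
      ?_ ?_ ?_).2
    · rw [integral_neg] at this
      exact this
    · filter_upwards [Ioi_mem_nhds hx] with y hy
      exact (integrableOn_of_antitone_bdd (ha y hy) (haM y hy) ht).aestronglyMeasurable
    · refine ae_restrict_of_forall_mem measurableSet_Ioo fun s hs y hy => ?_
      rw [norm_neg]
      exact hfD y hy s (hmem s hs)
    · exact integrable_const _
    · exact ae_restrict_of_forall_mem measurableSet_Ioo fun s hs y hy => hder y hy s (hmem s hs)
  have hcB : ContinuousOn (fun y => B y T) (Ioi x₁) := by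
    refine continuousOn_of_dominated (bound := fun _ => D) ?_ ?_ (integrable_const _) ?_
    · exact fun y hy => (integrableOn_of_antitone_bdd (hf y hy) (hfD y hy) le_rfl).aestronglyMeasurable
    · exact fun y hy => ae_restrict_of_forall_mem measurableSet_Ioo
        fun s hs => hfD y hy s ⟨hs.1.le, hs.2⟩
    · exact ae_restrict_of_forall_mem measurableSet_Ioo fun s hs => hfc s ⟨hs.1.le, hs.2⟩
  have hdE : ∀ t ≤ T, ∀ x > x₁,
      HasDerivAt (fun y => ε * Real.exp (A y t)) (-(ε * Real.exp (A x t) * B x t)) x := by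
    intro t ht x hx
    have h := ((hdA t ht x hx).exp).const_mul ε
    rwa [mul_neg, mul_neg, ← mul_assoc] at h
  have hd1 : ∀ x ≥ x₀, derivWithin (fun y => ε * Real.exp (A y T)) (Ici x₀) x
      = -(ε * Real.exp (A x T) * B x T) := fun x hx' =>
    (hdE T le_rfl x (hx.trans_le hx')).hasDerivWithinAt.derivWithin (uniqueDiffOn_Ici x₀ x hx')
  have hd2 : ∀ t ∈ Ioo 0 T, ∀ x ≥ x₀, derivWithin (fun w => φ w t) (Ici x₀) x
      = -(ε * Real.exp (A x t) * B x t) := by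
    intro t ht x hx'
    have hx1 : x₁ < x := hx.trans_le hx'
    refine HasDerivWithinAt.derivWithin (HasDerivAt.hasDerivWithinAt ?_)
      (uniqueDiffOn_Ici x₀ x hx')
    refine (hdE t ht.2.le x hx1).congr_of_eventuallyEq ?_
    filter_upwards [Ioi_mem_nhds hx1] with y hy using hφ y hy t ht
  have hcA : ContinuousOn (fun y => A y T) (Ici x₀) := fun x hx' =>
    (hdA T le_rfl x (hx.trans_le hx')).continuousAt.continuousWithinAt
  have hrE : ∀ t ∈ Ioo 0 T, ∀ x ≥ x₀,
      |Real.exp (A x T) - Real.exp (A x t)| ≤ M * (T - t) := by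
    intro t ht x hx'
    have hx1 : x₁ < x := hx.trans_le hx'
    exact (abs_exp_sub_exp_le (hA0 x hx1 T le_rfl) (hA0 x hx1 t ht.2.le)).trans
      (abs_integral_sub_le (ha x hx1) (haM x hx1) ht)
  have hU : TendstoUniformlyOn (fun t x => φ x t) (fun y => ε * Real.exp (A y T)) (𝓝[<] T)
      (Set.Ici x₀) := by
    refine tendstoUniformlyOn_of_rate (D := ε * M) hT fun t ht x hx' => ?_
    rw [hφ x (hx.trans_le hx') t ht, ← mul_sub, abs_mul, abs_of_pos hε, mul_assoc]
    exact mul_le_mul_of_nonneg_left (hrE t ht x hx') hε.le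
  refine ⟨fun y => ε * Real.exp (A y T), fun x hx' => hU.tendsto_at hx', ?_, hU, ?_⟩
  · rw [contDiffOn_one_iff_derivWithin (uniqueDiffOn_Ici x₀)]
    refine ⟨fun x hx' =>
      (hdE T le_rfl x (hx.trans_le hx')).differentiableAt.differentiableWithinAt, ?_⟩
    refine ContinuousOn.congr ?_ hd1
    exact ((continuousOn_const.mul hcA.rexp).mul
      (hcB.mono fun y hy => hx.trans_le hy)).neg
  · refine tendstoUniformlyOn_of_rate (D := ε * (M * (D * T) + D)) hT fun t ht x hx' => ?_
    have hx1 : x₁ < x := hx.trans_le hx'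
    rw [hd1 x hx', hd2 t ht x hx']
    have h1 := hrE t ht x hx'
    have h2 : |B x T| ≤ D * T := abs_integral_le_of_bdd hT (hfD x hx1)
    have h3 : |B x T - B x t| ≤ D * (T - t) := abs_integral_sub_le (hf x hx1) (hfD x hx1) ht
    have h4 : |Real.exp (A x t)| ≤ 1 := by
      rw [Real.abs_exp]
      exact Real.exp_le_one_iff.2 (hA0 x hx1 t ht.2.le)
    have e : -(ε * Real.exp (A x T) * B x T) - -(ε * Real.exp (A x t) * B x t) =
        -(ε * ((Real.exp (A x T) - Real.exp (A x t)) * B x T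
          + Real.exp (A x t) * (B x T - B x t))) := by ring
    rw [e, abs_neg, abs_mul, abs_of_pos hε, mul_assoc]
    refine mul_le_mul_of_nonneg_left ((abs_add_le _ _).trans ?_) hε.le
    rw [abs_mul, abs_mul, add_mul]
    have hTt : 0 ≤ T - t := by linarith [ht.2]
    refine add_le_add ?_ ?_
    · calc _ ≤ (M * (T - t)) * (D * T) := mul_le_mul h1 h2 (abs_nonneg _) (by positivity)
        _ = _ := by ring
    · calc _ ≤ 1 * (D * (T - t)) := mul_le_mul h4 h3 (abs_nonneg _) zero_le_one
        _ = _ := by ring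

/-! ### Data and tail integrals -/

lemma gD_facts {φ₀ g : ℝ → ℝ} (h : AdmissibleData φ₀ g) :
    ContinuousOn (gD g) (Ici 0) ∧ ∃ R > 0, (∀ z > R, gD g z = 0) ∧
      ∃ C, ∀ z ≥ 0, |gD g z| ≤ C := by
  obtain ⟨-, hg, ⟨b, hb⟩, -, -⟩ := h
  have hc : ContinuousOn (gD g) (Ici 0) :=
    hg.continuousOn_derivWithin (uniqueDiffOn_Ici 0) (by norm_num)
  have hz : ∀ z > max b 1, gD g z = 0 := by
    intro z hz
    have he : g =ᶠ[𝓝[Ici 0] z] fun _ => (0 : ℝ) := by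
      refine Filter.Eventually.filter_mono nhdsWithin_le_nhds ?_
      filter_upwards [Ioi_mem_nhds hz] with y hy
      exact hb y ((le_max_left b 1).trans hy.le)
    have hz0 : z ∈ Ici (0 : ℝ) := by
      have := (le_max_right b 1).trans_lt hz
      exact (zero_lt_one.trans this).le
    rw [gD, he.derivWithin_eq_of_mem hz0]
    simp
  have hR : 0 < max b 1 := zero_lt_one.trans_le (le_max_right b 1)
  refine ⟨hc, max b 1, hR, hz, ?_⟩
  obtain ⟨C, hC⟩ := isCompact_Icc.exists_bound_of_continuousOn
    (hc.mono (t := Icc 0 (max b 1)) fun y hy => hy.1)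
  refine ⟨C, fun z hz0 => ?_⟩
  rcases le_or_gt z (max b 1) with h | h
  · exact hC z ⟨hz0, h⟩
  · rw [hz z h, abs_zero]
    exact (norm_nonneg _).trans (hC 0 ⟨le_rfl, hR.le⟩)

section Tail

variable {f : ℝ → ℝ} {R : ℝ}

lemma tail_integrableOn (hf : ContinuousOn f (Ioi 0)) (hz : ∀ z > R, f z = 0) {x : ℝ}
    (hx : 0 < x) : IntegrableOn f (Ioi x) := by
  refine IntegrableOn.of_forall_sdiff_eq_zero (s := Icc x R) ?_ measurableSet_Ioi ?_
  · exact (hf.mono fun z hz => hx.trans_le hz.1).integrableOn_Icc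
  · intro z hz'
    refine hz z (not_le.1 fun h => hz'.2 ⟨le_of_lt hz'.1, h⟩)

lemma tail_eq (hf : ContinuousOn f (Ioi 0)) (hz : ∀ z > R, f z = 0) (hR : 0 < R) {x : ℝ}
    (hx : 0 < x) : ∫ z in Ioi x, f z = ∫ z in x..R, f z := by
  have h1 := intervalIntegral.integral_interval_add_Ioi (tail_integrableOn hf hz hx)
    (tail_integrableOn hf hz hR)
  have h2 : ∫ z in Ioi R, f z = 0 := setIntegral_eq_zero_of_forall_eq_zero fun z h => hz z h
  rw [← h1, h2, add_zero]

lemma tail_hasDerivAt (hf : ContinuousOn f (Ioi 0)) (hz : ∀ z > R, f z = 0) (hR : 0 < R) {x : ℝ}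
    (hx : 0 < x) : HasDerivAt (fun y => ∫ z in Ioi y, f z) (-(f x)) x := by
  have hsub : uIcc x R ⊆ Ioi 0 := fun z hz => (lt_min hx hR).trans_le hz.1
  have := intervalIntegral.integral_hasDerivAt_left (hf.mono hsub).intervalIntegrable
    (hf.stronglyMeasurableAtFilter isOpen_Ioi x hx) (hf.continuousAt (Ioi_mem_nhds hx))
  refine this.congr_of_eventuallyEq ?_
  filter_upwards [Ioi_mem_nhds hx] with y hy using tail_eq hf hz hR hy

lemma tail_abs_le {E : ℝ} (hz : ∀ z > R, f z = 0) (hR : 0 < R) {x : ℝ}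
    (hx : 0 < x) (hE : ∀ z > x, |f z| ≤ E) : |∫ z in Ioi x, f z| ≤ E * R := by
  have hE0 : 0 ≤ E := (abs_nonneg _).trans (hE (x + 1) (by linarith))
  have e : ∫ z in Ioi x, f z = ∫ z in Ioc x R, f z :=
    setIntegral_eq_of_subset_of_forall_sdiff_eq_zero measurableSet_Ioi (fun z h => h.1)
      fun z h => hz z (not_le.1 fun h' => h.2 ⟨h.1, h'⟩)
  rw [e]
  have := norm_setIntegral_le_of_norm_le_const (μ := volume) (s := Ioc x R) (f := f) (C := E)
    (by simp) (fun s hs => hE s hs.1)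
  refine this.trans (mul_le_mul_of_nonneg_left ?_ hE0)
  rw [Real.volume_real_Ioc]
  exact max_le (by linarith) hR.le

end Tail

/-! ### Properties of the flow map -/

lemma phi_pos {φ : ℝ → ℝ → ℝ} {Ts : ℝ} (hinf : ∀ T' < Ts, PosInfOn φ (Set.Icc 0 T')) {x t : ℝ}
    (hx : 0 ≤ x) (ht : t ∈ Ico 0 Ts) : 0 < φ x t := by
  obtain ⟨m, hm, h⟩ := hinf t ht.2
  exact hm.trans_le (h x hx t ⟨ht.1, le_rfl⟩)

section Flow

variable {ε₀ Ts : ℝ} {g : ℝ → ℝ} {φ : ℝ → ℝ → ℝ}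

lemma phi_continuousOn (hsol : IsFlowMapSolution (fun _ => ε₀) g φ (Set.Ico 0 Ts)) {t : ℝ}
    (ht : t ∈ Ico 0 Ts) : ContinuousOn (fun x => φ x t) (Ici 0) :=
  hsol.1.continuousOn.comp (f := fun x : ℝ => ((x, t) : ℝ × ℝ))
    (by fun_prop) fun _ hx => ⟨hx, ht⟩

lemma Phi_nonneg (hinf : ∀ T' < Ts, PosInfOn φ (Set.Icc 0 T')) {z t : ℝ} (hz : 0 ≤ z)
    (ht : t ∈ Ico 0 Ts) : 0 ≤ Phi φ z t :=
  intervalIntegral.integral_nonneg hz fun _ hu => (phi_pos hinf hu.1 ht).le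

lemma phi_antitone (hsol : IsFlowMapSolution (fun _ => ε₀) g φ (Set.Ico 0 Ts))
    (hg' : ∀ z ≥ (0:ℝ), gD g z ≤ 0)
    (hinf : ∀ T' < Ts, PosInfOn φ (Set.Icc 0 T')) {x : ℝ} (hx : 0 ≤ x) :
    AntitoneOn (φ x) (Ico 0 Ts) := by
  have hd := hsol.2.2 x hx
  refine antitoneOn_of_hasDerivWithinAt_nonpos (convex_Ico 0 Ts)
    (fun t ht => (hd t ht).continuousWithinAt)
    (fun t ht => (hd t (interior_subset ht)).mono interior_subset) fun t ht => ?_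
  have ht' := interior_subset ht
  refine mul_nonpos_of_nonneg_of_nonpos (phi_pos hinf hx ht').le ?_
  refine setIntegral_nonpos measurableSet_Ioi fun z hz => ?_
  have hz0 : 0 ≤ z := hx.trans (le_of_lt hz)
  exact div_nonpos_of_nonpos_of_nonneg (hg' z hz0) (Phi_nonneg hinf hz0 ht')

lemma phi_intervalIntegrable (hsol : IsFlowMapSolution (fun _ => ε₀) g φ (Set.Ico 0 Ts)) {t : ℝ}
    (ht : t ∈ Ico 0 Ts) {x y : ℝ} (hx : 0 ≤ x) (hy : 0 ≤ y) :
    IntervalIntegrable (fun σ => φ σ t) volume x y :=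
  ((phi_continuousOn hsol ht).mono fun _ hz => (le_min hx hy).trans hz.1).intervalIntegrable

lemma Phi_antitone (hsol : IsFlowMapSolution (fun _ => ε₀) g φ (Set.Ico 0 Ts))
    (hg' : ∀ z ≥ (0:ℝ), gD g z ≤ 0)
    (hinf : ∀ T' < Ts, PosInfOn φ (Set.Icc 0 T')) {z : ℝ} (hz : 0 ≤ z) :
    AntitoneOn (Phi φ z) (Ico 0 Ts) := fun _ hs _ ht hst =>
  intervalIntegral.integral_mono_on hz (phi_intervalIntegrable hsol ht le_rfl hz)
    (phi_intervalIntegrable hsol hs le_rfl hz)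
    fun _ hσ => phi_antitone hsol hg' hinf hσ.1 hs ht hst

lemma Phi_continuousOn (hsol : IsFlowMapSolution (fun _ => ε₀) g φ (Set.Ico 0 Ts)) {t : ℝ}
    (ht : t ∈ Ico 0 Ts) : ContinuousOn (fun z => Phi φ z t) (Ioi 0) := by
  intro z hz
  have hc : ContinuousOn (fun x => φ x t) (Ioi 0) := (phi_continuousOn hsol ht).mono Ioi_subset_Ici_self
  exact (intervalIntegral.integral_hasDerivAt_right
    (phi_intervalIntegrable hsol ht le_rfl (le_of_lt hz))
    (hc.stronglyMeasurableAtFilter isOpen_Ioi z hz)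
    (hc.continuousAt (Ioi_mem_nhds hz))).continuousAt.continuousWithinAt

lemma Phi_add (hsol : IsFlowMapSolution (fun _ => ε₀) g φ (Set.Ico 0 Ts)) {t : ℝ}
    (ht : t ∈ Ico 0 Ts) {x y : ℝ} (hx : 0 ≤ x) (hy : 0 ≤ y) :
    Phi φ x t + ∫ σ in x..y, φ σ t = Phi φ y t :=
  intervalIntegral.integral_add_adjacent_intervals (phi_intervalIntegrable hsol ht le_rfl hx)
    (phi_intervalIntegrable hsol ht hx hy)

lemma Phi_mono (hsol : IsFlowMapSolution (fun _ => ε₀) g φ (Set.Ico 0 Ts))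
    (hinf : ∀ T' < Ts, PosInfOn φ (Set.Icc 0 T')) {t : ℝ}
    (ht : t ∈ Ico 0 Ts) {x y : ℝ} (hx : 0 ≤ x) (hxy : x ≤ y) : Phi φ x t ≤ Phi φ y t := by
  rw [← Phi_add hsol ht hx (hx.trans hxy)]
  have := intervalIntegral.integral_nonneg (μ := volume) (f := fun σ => φ σ t) hxy
    fun u hu => (phi_pos hinf (hx.trans hu.1) ht).le
  linarith

lemma Phi_pos (hsol : IsFlowMapSolution (fun _ => ε₀) g φ (Set.Ico 0 Ts))
    (hinf : ∀ T' < Ts, PosInfOn φ (Set.Icc 0 T')) {z t : ℝ} (hz : 0 < z)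
    (ht : t ∈ Ico 0 Ts) : 0 < Phi φ z t :=
  intervalIntegral.intervalIntegral_pos_of_pos_on (phi_intervalIntegrable hsol ht le_rfl hz.le)
    (fun _ hu => phi_pos hinf hu.1.le ht) hz

/-- The lower bound `Φ(x₀,t) ≥ L` survives, with constant `L / 2`, slightly to the left of `x₀`
because `φ ≤ ε₀`; so the estimates hold on an open neighbourhood of `[x₀,∞)`. -/
lemma exists_Phi_lower_bound (hε₀ : 0 < ε₀)
    (hsol : IsFlowMapSolution (fun _ => ε₀) g φ (Set.Ico 0 Ts))
    (hg' : ∀ z ≥ (0:ℝ), gD g z ≤ 0)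
    (hinf : ∀ T' < Ts, PosInfOn φ (Set.Icc 0 T')) {x₀ : ℝ} (hx₀ : 0 < x₀)
    (hlim : ∃ L : ℝ, 0 < L ∧ Tendsto (fun t => Phi φ x₀ t) (𝓝[<] Ts) (𝓝 L)) :
    ∃ x₁ > 0, x₁ < x₀ ∧ ∃ c > 0, ∀ z > x₁, ∀ t ∈ Ico 0 Ts, c ≤ Phi φ z t := by
  obtain ⟨L, hL, hl⟩ := hlim
  have h0 : ∀ t ∈ Ico 0 Ts, L ≤ Phi φ x₀ t := by
    intro t ht
    refine le_of_tendsto hl ?_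
    filter_upwards [Ioo_mem_nhdsLT ht.2] with s hs
    exact Phi_antitone hsol hg' hinf hx₀.le ht ⟨ht.1.trans hs.1.le, hs.2⟩ hs.1.le
  set δ := min (x₀ / 2) (L / (2 * ε₀)) with hδ
  have hδ0 : 0 < δ := by positivity
  have hδ1 : δ ≤ x₀ / 2 := min_le_left _ _
  have hδ2 : ε₀ * δ ≤ L / 2 := by
    calc ε₀ * δ ≤ ε₀ * (L / (2 * ε₀)) := mul_le_mul_of_nonneg_left (min_le_right _ _) hε₀.le
      _ = L / 2 := by field_simp
  have hx1 : 0 < x₀ - δ := by linarith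
  refine ⟨x₀ - δ, hx1, by linarith, L / 2, by positivity, fun z hz t ht => ?_⟩
  refine le_trans ?_ (Phi_mono hsol hinf ht hx1.le hz.le)
  have hadd := Phi_add hsol ht hx1.le hx₀.le
  have hle : ∫ σ in (x₀ - δ)..x₀, φ σ t ≤ ε₀ * δ := by
    have := intervalIntegral.integral_mono_on (μ := volume) (a := x₀ - δ) (b := x₀)
      (f := fun σ => φ σ t) (g := fun _ => ε₀) (by linarith)
      (phi_intervalIntegrable hsol ht hx1.le hx₀.le) (by simp) fun σ hσ => ?_
    · simpa [mul_comm] using this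
    · have hσ0 : 0 ≤ σ := hx1.le.trans hσ.1
      have h := phi_antitone hsol hg' hinf hσ0 ⟨le_rfl, ht.1.trans_lt ht.2⟩ ht ht.1
      rwa [hsol.2.1 σ hσ0] at h
  linarith [h0 t ht]

lemma phi_eq_exp (hε₀ : 0 < ε₀) (hsol : IsFlowMapSolution (fun _ => ε₀) g φ (Set.Ico 0 Ts))
    (hinf : ∀ T' < Ts, PosInfOn φ (Set.Icc 0 T')) {x t : ℝ} (hx : 0 ≤ x) (ht : t ∈ Ioo 0 Ts)
    (ha : AntitoneOn (fun s => ∫ z in Ioi x, gD g z / Phi φ z s) (Ico 0 Ts)) :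
    φ x t = ε₀ * Real.exp (∫ s in Ioo 0 t, ∫ z in Ioi x, gD g z / Phi φ z s) := by
  have hsub : Icc 0 t ⊆ Ico 0 Ts := fun s hs => ⟨hs.1, hs.2.trans_lt ht.2⟩
  have hd := hsol.2.2 x hx
  have h1 := intervalIntegral.integral_eq_sub_of_hasDerivAt_of_le (a := 0) (b := t)
    (f := fun s => Real.log (φ x s)) (f' := fun s => ∫ z in Ioi x, gD g z / Phi φ z s) ht.1.le
    ?_ ?_ ?_
  · rw [intervalIntegral.integral_of_le ht.1.le, integral_Ioc_eq_integral_Ioo] at h1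
    rw [h1, hsol.2.1 x hx, Real.exp_sub, Real.exp_log hε₀,
      Real.exp_log (phi_pos hinf hx ⟨ht.1.le, ht.2⟩)]
    field_simp
  · refine ContinuousOn.log (fun s hs => ((hd s (hsub hs)).continuousWithinAt).mono hsub) ?_
    exact fun s hs => (phi_pos hinf hx (hsub hs)).ne'
  · intro s hs
    have hs' : s ∈ Ico 0 Ts := ⟨hs.1.le, hs.2.trans ht.2⟩
    have hp := phi_pos hinf hx hs'
    have := ((hd s hs').hasDerivAt (Ico_mem_nhds hs.1 hs'.2)).log hp.ne'
    rwa [mul_div_cancel_left₀ _ hp.ne'] at this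
  · refine AntitoneOn.intervalIntegrable ?_
    rw [uIcc_of_le ht.1.le]
    exact ha.mono hsub

end Flow

/-- Lemma `reg1`: let `φ` be a solution on `[0,T_s)` with constant data
`φ₀ ≡ ε₀ > 0`, `g' ≤ 0`, positive infimum on every `[0,T']`, `T' < T_s`, and let `x₀ > 0`
satisfy `lim_{t→T_s} Φ(x₀,t) > 0`. Then `φ(x,T_s) = lim_{t→T_s} φ(x,t)` exists for all
`x ≥ x₀`, `φ(·,T_s) ∈ C¹[x₀,∞)`, and `φ(·,t) → φ(·,T_s)` in `C¹` on `[x₀,∞)`. -/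
theorem statement13 (ε₀ Ts x₀ : ℝ) (g : ℝ → ℝ) (φ : ℝ → ℝ → ℝ)
    (hε₀ : 0 < ε₀) (hTs : 0 < Ts) (hx₀ : 0 < x₀)
    (hadm : AdmissibleData (fun _ => ε₀) g)
    (hg' : ∀ z ≥ (0:ℝ), gD g z ≤ 0)
    (hsol : IsFlowMapSolution (fun _ => ε₀) g φ (Set.Ico 0 Ts))
    (hinf : ∀ T' < Ts, PosInfOn φ (Set.Icc 0 T'))
    (hlim : ∃ L : ℝ, 0 < L ∧ Tendsto (fun t => Phi φ x₀ t) (𝓝[<] Ts) (𝓝 L)) :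
    ∃ φs : ℝ → ℝ,
      (∀ x ≥ x₀, Tendsto (fun t => φ x t) (𝓝[<] Ts) (𝓝 (φs x))) ∧
      ContDiffOn ℝ 1 φs (Set.Ici x₀) ∧
      TendstoUniformlyOn (fun t x => φ x t) φs (𝓝[<] Ts) (Set.Ici x₀) ∧
      TendstoUniformlyOn (fun t x => derivWithin (fun w => φ w t) (Set.Ici x₀) x)
        (fun x => derivWithin φs (Set.Ici x₀) x) (𝓝[<] Ts) (Set.Ici x₀) := by
  obtain ⟨hgc, R, hR, hgz, C, hC⟩ := gD_facts hadm
  obtain ⟨x₁, hx₁, hx₁₀, c, hc, hΦ⟩ := exists_Phi_lower_bound hε₀ hsol hg' hinf hx₀ hlim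
  set f : ℝ → ℝ → ℝ := fun z s => gD g z / Phi φ z s with hf
  have hC0 : 0 ≤ C := (abs_nonneg _).trans (hC 0 le_rfl)
  have hfc : ∀ s ∈ Ico 0 Ts, ContinuousOn (fun z => f z s) (Ioi 0) := fun s hs =>
    (hgc.mono Ioi_subset_Ici_self).div (Phi_continuousOn hsol hs)
      fun z hz => (Phi_pos hsol hinf hz hs).ne'
  have hfz : ∀ s, ∀ z > R, f z s = 0 := fun s z hz => by simp [hf, hgz z hz]
  have hfa : ∀ x > 0, AntitoneOn (f x) (Ico 0 Ts) := by
    intro x hx s hs t ht hst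
    have h1 := Phi_antitone hsol hg' hinf (le_of_lt hx) hs ht hst
    have h2 := one_div_le_one_div_of_le (Phi_pos hsol hinf hx ht) h1
    simp only [hf, div_eq_mul_one_div (gD g x)]
    exact mul_le_mul_of_nonpos_left h2 (hg' x (le_of_lt hx))
  have hfD : ∀ x > x₁, ∀ s ∈ Ico 0 Ts, |f x s| ≤ C / c := by
    intro x hx s hs
    have h1 := hΦ x hx s hs
    rw [abs_div, abs_of_pos (hc.trans_le h1)]
    exact div_le_div₀ hC0 (hC x (hx₁.trans hx).le) hc h1
  have haa : ∀ x > x₁, AntitoneOn (fun s => ∫ z in Ioi x, f z s) (Ico 0 Ts) := by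
    intro x hx s hs t ht hst
    have hx0 : 0 < x := hx₁.trans hx
    refine setIntegral_mono_on (tail_integrableOn (hfc t ht) (hfz t) hx0)
      (tail_integrableOn (hfc s hs) (hfz s) hx0) measurableSet_Ioi fun z hz => ?_
    exact hfa z (hx0.trans hz) hs ht hst
  refine core (a := fun x s => ∫ z in Ioi x, f z s) (f := f) (M := C / c * R) (D := C / c)
    hTs hx₁₀ hε₀ haa (fun x hx => hfa x (hx₁.trans hx)) ?_ hfD ?_ ?_ ?_ ?_
  · exact fun x hx s hs => tail_abs_le (hfz s) hR (hx₁.trans hx)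
      fun z hz => hfD z (lt_trans hx hz) s hs
  · intro x hx s hs
    refine setIntegral_nonpos measurableSet_Ioi fun z hz => ?_
    have hz0 : 0 ≤ z := ((hx₁.trans hx).trans hz).le
    exact div_nonpos_of_nonpos_of_nonneg (hg' z hz0) (Phi_nonneg hinf hz0 hs)
  · exact fun x hx s hs => tail_hasDerivAt (hfc s hs) (hfz s) hR (hx₁.trans hx)
  · exact fun s hs => (hfc s hs).mono fun z hz => hx₁.trans hz
  · exact fun x hx t ht => phi_eq_exp hε₀ hsol hinf (hx₁.trans hx).le ht (haa x hx)
end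

section
/- Let φ ∈ C¹(ℝ⁺ × [0,T]) be a solution of the flow-map equation with admissible data (φ₀, g) and inf_{(x,t) ∈ ℝ⁺×[0,T]} φ(x,t) > 0, and let a > 0 be such that g'(z) = 0 for all z ≥ a. Then for every t ∈ [0,T], the time derivative of Φ(a,t) satisfies ∂_t Φ(a,t) = g(a) − g(0). -/
/-!
Fix a time `t`, write `f = φ(·,t)`, `Φ(x) = ∫₀ˣ f` and `I(x) = ∫ₓ^∞ g'/Φ`. On `(0, a)` one has
`(Φ I + g)' = f I`, because `Φ' = f` and `I' = -g'/Φ`. As `Φ(0) = 0` and `I(a) = 0`, integration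
gives `∫₀ᵃ f I = g(a) - g(0)` (`integral_mul_tail`). The boundary term at `0` makes sense because
`g'(0) = 0` and `g ∈ C²` give `|g'(z)| ≤ C z` (`exists_gD_le`), while `Φ(z) ≥ m z`, so that `g'/Φ`
is bounded by `C / m` and `I` is bounded.

Since `f I` is `∂ₜφ`, it remains to differentiate `Φ(a,·)` under the integral sign. The same bound
on `I` and the boundedness of `φ` on the compact set `[0,a] × [0,T]` bound `∂ₜφ` there, hence all
difference quotients in time, and dominated convergence applies.
-/

open Set MeasureTheory Filter Topology

lemma exists_gD_le {g : ℝ → ℝ} (hg : ContDiffOn ℝ 2 g (Ici 0)) (h0 : gD g 0 = 0) (a : ℝ) :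
    ∃ C : ℝ, 0 ≤ C ∧ ∀ z ∈ Icc (0:ℝ) a, |gD g z| ≤ C * z := by
  have h1 : ContDiffOn ℝ 1 (gD g) (Ici 0) :=
    hg.derivWithin (uniqueDiffOn_Ici 0) (by norm_num)
  have h2 : ContinuousOn (derivWithin (gD g) (Ici 0)) (Ici 0) :=
    h1.continuousOn_derivWithin (uniqueDiffOn_Ici 0) le_rfl
  obtain ⟨C, hC⟩ := isCompact_Icc.exists_bound_of_continuousOn
    (h2.mono (Icc_subset_Ici_self : Icc (0:ℝ) a ⊆ Ici 0))
  refine ⟨max C 0, le_max_right _ _, fun z hz => ?_⟩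
  have hd : ∀ x ∈ Icc (0:ℝ) a,
      HasDerivWithinAt (gD g) (derivWithin (gD g) (Ici 0) x) (Icc 0 a) x := fun x hx =>
    ((h1.differentiableOn one_ne_zero x hx.1).hasDerivWithinAt).mono Icc_subset_Ici_self
  have := (convex_Icc (0:ℝ) a).norm_image_sub_le_of_norm_hasDerivWithin_le hd
    (fun x hx => (hC x hx).trans (le_max_left C 0)) (left_mem_Icc.2 (hz.1.trans hz.2)) hz
  simpa [h0, abs_of_nonneg hz.1] using this

section FixedTime

variable {f g : ℝ → ℝ} {m C a : ℝ}

lemma intervalIntegrable_of_Ici (hf : ContinuousOn f (Ici 0)) {x y : ℝ} (hx : 0 ≤ x) (hy : 0 ≤ y) :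
    IntervalIntegrable f volume x y :=
  (hf.mono fun _ hz => (le_min hx hy).trans hz.1).intervalIntegrable

lemma mul_le_primitive (hf : ContinuousOn f (Ici 0)) (hm : ∀ x ≥ (0:ℝ), m ≤ f x)
    {z : ℝ} (hz : 0 ≤ z) : m * z ≤ ∫ σ in (0:ℝ)..z, f σ := by
  have := intervalIntegral.integral_mono_on hz (intervalIntegrable_const (c := m))
    (intervalIntegrable_of_Ici hf le_rfl hz) (fun x hx => hm x hx.1)
  simpa [mul_comm] using this

lemma hasDerivAt_primitive (hf : ContinuousOn f (Ici 0)) {z : ℝ} (hz : 0 < z) :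
    HasDerivAt (fun z => ∫ σ in (0:ℝ)..z, f σ) (f z) z :=
  intervalIntegral.integral_hasDerivAt_right (intervalIntegrable_of_Ici hf le_rfl hz.le)
    ((hf.mono Ioi_subset_Ici_self).stronglyMeasurableAtFilter isOpen_Ioi z hz)
    (hf.continuousAt (Ici_mem_nhds hz))

lemma continuousOn_quotient (hf : ContinuousOn f (Ici 0)) (hm0 : 0 < m)
    (hm : ∀ x ≥ (0:ℝ), m ≤ f x) (hg : ContDiffOn ℝ 2 g (Ici 0)) :
    ContinuousOn (fun z => gD g z / ∫ σ in (0:ℝ)..z, f σ) (Ioi 0) := by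
  have h1 : ContinuousOn (gD g) (Ici 0) :=
    hg.continuousOn_derivWithin (uniqueDiffOn_Ici 0) (by norm_num)
  refine (h1.mono Ioi_subset_Ici_self).div
    (fun z hz => (hasDerivAt_primitive hf hz).continuousAt.continuousWithinAt) fun z hz => ?_
  exact ((mul_pos hm0 hz).trans_le (mul_le_primitive hf hm (le_of_lt hz))).ne'

lemma abs_quotient_le (hf : ContinuousOn f (Ici 0)) (hm0 : 0 < m)
    (hm : ∀ x ≥ (0:ℝ), m ≤ f x) (hC0 : 0 ≤ C) (hC : ∀ z ∈ Icc (0:ℝ) a, |gD g z| ≤ C * z)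
    {z : ℝ} (hz : z ∈ Ioc 0 a) :
    |gD g z / ∫ σ in (0:ℝ)..z, f σ| ≤ C / m := by
  have hP := mul_le_primitive hf hm hz.1.le
  have hmz := mul_pos hm0 hz.1
  rw [abs_div, abs_of_pos (hmz.trans_le hP)]
  calc _ ≤ C * z / (m * z) :=
        div_le_div₀ (mul_nonneg hC0 hz.1.le) (hC z ⟨hz.1.le, hz.2⟩) hmz hP
    _ = C / m := mul_div_mul_right _ _ hz.1.ne'

lemma intervalIntegrable_quotient (hf : ContinuousOn f (Ici 0)) (hm0 : 0 < m)
    (hm : ∀ x ≥ (0:ℝ), m ≤ f x) (hg : ContDiffOn ℝ 2 g (Ici 0))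
    (hC0 : 0 ≤ C) (hC : ∀ z ∈ Icc (0:ℝ) a, |gD g z| ≤ C * z) (ha : 0 < a) :
    IntervalIntegrable (fun z => gD g z / ∫ σ in (0:ℝ)..z, f σ) volume 0 a := by
  rw [intervalIntegrable_iff_integrableOn_Ioc_of_le ha.le]
  refine IntegrableOn.of_bound (by simp)
    (((continuousOn_quotient hf hm0 hm hg).mono fun z hz => hz.1).aestronglyMeasurable
      measurableSet_Ioc) (C / m) ?_
  filter_upwards [ae_restrict_mem measurableSet_Ioc] with z hz
  exact abs_quotient_le hf hm0 hm hC0 hC hz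

lemma setIntegral_Ioi_quotient (hga : ∀ z ≥ a, gD g z = 0) {x : ℝ} (hx : x ≤ a) :
    ∫ z in Ioi x, gD g z / ∫ σ in (0:ℝ)..z, f σ
      = ∫ z in x..a, gD g z / ∫ σ in (0:ℝ)..z, f σ := by
  rw [intervalIntegral.integral_of_le hx]
  refine setIntegral_eq_of_subset_of_forall_sdiff_eq_zero measurableSet_Ioi
    Ioc_subset_Ioi_self fun z hz => ?_
  have : a ≤ z := by
    by_contra h
    exact hz.2 ⟨hz.1, (not_le.1 h).le⟩
  simp [hga z this]

lemma abs_tail_le (hf : ContinuousOn f (Ici 0)) (hm0 : 0 < m)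
    (hm : ∀ x ≥ (0:ℝ), m ≤ f x)
    (hC0 : 0 ≤ C) (hC : ∀ z ∈ Icc (0:ℝ) a, |gD g z| ≤ C * z) (hga : ∀ z ≥ a, gD g z = 0)
    {x : ℝ} (hx : x ∈ Icc 0 a) :
    |∫ z in Ioi x, gD g z / ∫ σ in (0:ℝ)..z, f σ| ≤ C / m * a := by
  rw [setIntegral_Ioi_quotient hga hx.2]
  have := intervalIntegral.norm_integral_le_of_norm_le_const
    (f := fun z => gD g z / ∫ σ in (0:ℝ)..z, f σ) (C := C / m) (a := x) (b := a)
    fun z hz => by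
      rw [uIoc_of_le hx.2] at hz
      exact abs_quotient_le hf hm0 hm hC0 hC ⟨hx.1.trans_lt hz.1, hz.2⟩
  rw [abs_of_nonneg (sub_nonneg.2 hx.2)] at this
  refine this.trans ?_
  gcongr
  linarith [hx.1]

/-- The integration by parts at a fixed time: the function `Φ I + g`, with `Φ` the primitive of `f`
and `I` the tail integral of `g' / Φ`, is a primitive of `f I` on `(0, a)`. -/
lemma integral_mul_tail (hf : ContinuousOn f (Ici 0)) (hm0 : 0 < m)
    (hm : ∀ x ≥ (0:ℝ), m ≤ f x) (hg : ContDiffOn ℝ 2 g (Ici 0))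
    (hC0 : 0 ≤ C) (hC : ∀ z ∈ Icc (0:ℝ) a, |gD g z| ≤ C * z) (ha : 0 < a)
    (hga : ∀ z ≥ a, gD g z = 0) :
    ∫ x in (0:ℝ)..a, f x * ∫ z in Ioi x, gD g z / ∫ σ in (0:ℝ)..z, f σ = g a - g 0 := by
  set P : ℝ → ℝ := fun z => ∫ σ in (0:ℝ)..z, f σ with hP
  set q : ℝ → ℝ := fun z => gD g z / P z with hq
  have hqi : IntervalIntegrable q volume 0 a :=
    intervalIntegrable_quotient hf hm0 hm hg hC0 hC ha
  have hqc : ContinuousOn q (Ioi 0) := continuousOn_quotient hf hm0 hm hg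
  have hPc : ContinuousOn P (Icc 0 a) := by
    have := intervalIntegral.continuousOn_primitive_interval'
      (intervalIntegrable_of_Ici hf le_rfl ha.le) left_mem_uIcc
    rwa [uIcc_of_le ha.le] at this
  have hJc : ContinuousOn (fun x => ∫ z in x..a, q z) (Icc 0 a) := by
    have := (intervalIntegral.continuousOn_primitive_interval' hqi right_mem_uIcc).neg
    rw [uIcc_of_le ha.le] at this
    exact this.congr fun x _ => intervalIntegral.integral_symm a x
  have hfI : ∫ x in (0:ℝ)..a, f x * ∫ z in Ioi x, q z
      = ∫ x in (0:ℝ)..a, f x * ∫ z in x..a, q z := by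
    refine intervalIntegral.integral_congr fun x hx => ?_
    rw [uIcc_of_le ha.le] at hx
    rw [setIntegral_Ioi_quotient hga hx.2]
  have hmain := intervalIntegral.integral_eq_sub_of_hasDerivAt_of_le ha.le
    (f := fun x => P x * (∫ z in x..a, q z) + g x)
    (f' := fun x => f x * ∫ z in x..a, q z)
    ((hPc.mul hJc).add (hg.continuousOn.mono Icc_subset_Ici_self))
    (fun x hx => by
      have hPx : P x ≠ 0 := ((mul_pos hm0 hx.1).trans_le (mul_le_primitive hf hm hx.1.le)).ne'
      have hPd : HasDerivAt P (f x) x := hasDerivAt_primitive hf hx.1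
      have hJd : HasDerivAt (fun x => ∫ z in x..a, q z) (-q x) x :=
        intervalIntegral.integral_hasDerivAt_left
          (hqi.mono_set (by
            rw [uIcc_of_le hx.2.le, uIcc_of_le ha.le]; exact Icc_subset_Icc_left hx.1.le))
          (hqc.stronglyMeasurableAtFilter isOpen_Ioi x hx.1)
          (hqc.continuousAt (Ioi_mem_nhds hx.1))
      have hgd : HasDerivAt g (gD g x) x :=
        ((hg.differentiableOn two_ne_zero x hx.1.le).hasDerivWithinAt).hasDerivAt
          (Ici_mem_nhds hx.1)
      refine ((hPd.mul hJd).add hgd).congr_deriv ?_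
      simp only [hq]
      field_simp
      ring)
    (((hf.mono Icc_subset_Ici_self).mul hJc).intervalIntegrable_of_Icc ha.le)
  rw [hfI, hmain]
  simp [hP]

end FixedTime

/-- from the proof of Theorem `thm:finite`: for a solution `φ` of the
flow-map equation with admissible data `(φ₀, g)` and positive infimum, if `g'(z) = 0` for
all `z ≥ a` (`a > 0`), then `∂ₜ Φ(a,t) = g(a) − g(0)` for every `t ∈ [0,T]`. -/
theorem statement16 (φ₀ g : ℝ → ℝ) (φ : ℝ → ℝ → ℝ) (T a : ℝ)
    (hT : 0 < T) (ha : 0 < a)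
    (hadm : AdmissibleData φ₀ g)
    (hsol : IsFlowMapSolution φ₀ g φ (Set.Icc 0 T))
    (hinf : PosInfOn φ (Set.Icc 0 T))
    (hga : ∀ z ≥ a, gD g z = 0) :
    ∀ t ∈ Set.Icc (0:ℝ) T,
      HasDerivWithinAt (fun s => Phi φ a s) (g a - g 0) (Set.Icc 0 T) t := by
  obtain ⟨-, hg, -, -, hg0⟩ := hadm
  obtain ⟨hφ, -, hder⟩ := hsol
  obtain ⟨m, hm0, hm⟩ := hinf
  obtain ⟨C, hC0, hC⟩ := exists_gD_le hg hg0 a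
  have hf : ∀ t ∈ Icc (0:ℝ) T, ContinuousOn (fun x => φ x t) (Ici 0) := fun t ht =>
    hφ.continuousOn.comp (f := fun x : ℝ => (x, t)) (by fun_prop) fun x hx => ⟨hx, ht⟩
  obtain ⟨M, hM⟩ := (isCompact_Icc.prod isCompact_Icc).exists_bound_of_continuousOn
    (hφ.continuousOn.mono (prod_mono (Icc_subset_Ici_self : Icc 0 a ⊆ Ici 0) subset_rfl))
  have hbound : ∀ x ∈ Icc 0 a, ∀ t ∈ Icc 0 T,
      ‖φ x t * ∫ z in Ioi x, gD g z / Phi φ z t‖ ≤ M * (C / m * a) := fun x hx t ht => by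
    rw [norm_mul]
    exact mul_le_mul (hM (x, t) ⟨hx, ht⟩)
      (abs_tail_le (hf t ht) hm0 (fun x hx => hm x hx t ht) hC0 hC hga hx)
      (norm_nonneg _) ((norm_nonneg _).trans (hM (x, t) ⟨hx, ht⟩))
  intro t ht
  rw [← integral_mul_tail (hf t ht) hm0 (fun x hx => hm x hx t ht) hg hC0 hC ha hga,
    hasDerivWithinAt_iff_tendsto_slope]
  have hslope : ∀ s ∈ Icc 0 T, slope (fun s => Phi φ a s) t s
      = ∫ x in (0:ℝ)..a, slope (fun s => φ x s) t s := fun s hs => by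
    simp only [slope_def_module, Phi, smul_eq_mul]
    rw [intervalIntegral.integral_const_mul, intervalIntegral.integral_sub
      (intervalIntegrable_of_Ici (hf s hs) le_rfl ha.le)
      (intervalIntegrable_of_Ici (hf t ht) le_rfl ha.le)]
  have hev : ∀ᶠ s in 𝓝[Icc 0 T \ {t}] t, s ∈ Icc 0 T := by
    filter_upwards [self_mem_nhdsWithin] with s hs using hs.1
  refine Tendsto.congr' (hev.mono fun s hs => (hslope s hs).symm) ?_
  refine intervalIntegral.tendsto_integral_filter_of_dominated_convergence
    (fun _ => M * (C / m * a)) ?_ ?_ intervalIntegrable_const ?_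
  · filter_upwards [hev] with s hs
    rw [uIoc_of_le ha.le]
    refine ContinuousOn.aestronglyMeasurable ?_ measurableSet_Ioc
    simp only [slope_def_module]
    exact (((hf s hs).sub (hf t ht)).const_smul ((s - t)⁻¹)).mono fun x (hx : x ∈ Ioc 0 a) => le_of_lt hx.1
  · filter_upwards [self_mem_nhdsWithin] with s hs
    refine Eventually.of_forall fun x hx => ?_
    rw [uIoc_of_le ha.le] at hx
    have hx' : x ∈ Icc 0 a := ⟨hx.1.le, hx.2⟩
    have hst : 0 < ‖s - t‖ := norm_pos_iff.2 (sub_ne_zero.2 hs.2)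
    have := (convex_Icc (0:ℝ) T).norm_image_sub_le_of_norm_hasDerivWithin_le
      (fun r hr => hder x hx'.1 r hr) (fun r hr => hbound x hx' r hr) ht hs.1
    rw [slope_def_field, norm_div, div_le_iff₀ hst]
    exact this
  · refine Eventually.of_forall fun x hx => ?_
    rw [uIoc_of_le ha.le] at hx
    exact hasDerivWithinAt_iff_tendsto_slope.1 (hder x hx.1.le t ht)
end

section
/- Assume the bootstrap setup with parameters ε₀ ∈ (0,1), 0 < K₀ < K₁, β ∈ (0,1), κ > 1 satisfying ε₀ ≤ κ ε₀^{1/β}. Let T_s > 0 be finite and let φ ∈ C¹(ℝ⁺ × [0,T_s)) be a solution of the flow-map equation with data φ₀ ≡ ε₀ and g, with inf_{(x,t) ∈ ℝ⁺×[0,T']} φ(x,t) > 0 for every T' < T_s, such that the bootstrap property (B) holds on [0,T_s) and lim_{t→T_s} ε(t) = 0. Then for every x > 0 the pointwise limit φ(x,T_s) := lim_{t→T_s} φ(x,t) exists and satisfies φ(x,T_s) ≤ κ x^{1/β}; consequently the limit Φ(z,T_s) := lim_{t→T_s} Φ(z,t) exists for every z ≥ 0 and satisfies Φ(z,T_s)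 ≤ (κβ/(β+1)) z^{1/β + 1}. -/
/-!
Since `g' ≤ 0` and `Φ > 0`, the right-hand side of the flow-map equation is non-positive, so
`t ↦ φ x t` is non-increasing and positive on `[0, Ts)` (`flow_antitoneOn`); hence the pointwise
limit exists. For `x < ε₀ ^ β`, the continuous function `ε = φ 0` descends from `ε₀` to `0`, so
`ε t = x ^ (1 / β)` at some time `t`, where (B) gives `φ x t ≤ κ * x ^ (1 / β)`; monotonicity carries
the bound to the limit. For `x ≥ ε₀ ^ β` the initial value `ε₀ ≤ x ^ (1 / β)` is already small
enough. The limit of `Φ` follows by dominated convergence with the constant bound `ε₀`, and its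
bound by integrating `κ * σ ^ (1 / β)`.
-/

open Set MeasureTheory Filter Topology

/-- The constant `c_β = β(β+1)/((2β+1)(1−β))`. -/
noncomputable def cBeta (β : ℝ) : ℝ := β * (β + 1) / ((2 * β + 1) * (1 - β))

/-- The bootstrap setup: data `φ₀ ≡ ε₀ ∈ (0,1)`, `g ∈ C²(ℝ⁺)` compactly supported with
`g'(0) = 0`, `g' ≤ 0` on `ℝ⁺`, and constants `0 < K₀ < K₁` with
`ε₀² K₀ z ≤ −g'(z) ≤ ε₀² K₁ z` for `0 ≤ z ≤ 1`. -/
def BootstrapData (ε₀ K₀ K₁ : ℝ) (g : ℝ → ℝ) : Prop :=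
  ε₀ ∈ Set.Ioo (0:ℝ) 1 ∧ 0 < K₀ ∧ K₀ < K₁ ∧
  ContDiffOn ℝ 2 g (Set.Ici 0) ∧
  (∃ a : ℝ, ∀ z ≥ a, g z = 0) ∧
  gD g 0 = 0 ∧
  (∀ z ≥ (0:ℝ), gD g z ≤ 0) ∧
  (∀ z ∈ Set.Icc (0:ℝ) 1, ε₀ ^ 2 * K₀ * z ≤ -gD g z ∧ -gD g z ≤ ε₀ ^ 2 * K₁ * z)

/-- The bootstrap property (B) on the time interval `I`:
`φ(x,t) ≤ κ ε(t)` for all `x ∈ [0, l(t)]`, `t ∈ I`, where `ε(t) = φ(0,t)`, `l(t) = ε(t)^β`. -/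
def BootstrapB (φ : ℝ → ℝ → ℝ) (κ β : ℝ) (I : Set ℝ) : Prop :=
  ∀ t ∈ I, ∀ x ∈ Set.Icc (0:ℝ) ((φ 0 t) ^ β), φ x t ≤ κ * φ 0 t

theorem flow_pos {φ : ℝ → ℝ → ℝ} {Ts : ℝ} (hinf : ∀ T' < Ts, PosInfOn φ (Set.Icc 0 T'))
    {x t : ℝ} (hx : 0 ≤ x) (ht : t ∈ Set.Ico 0 Ts) : 0 < φ x t := by
  obtain ⟨m, hm, h⟩ := hinf t ht.2
  exact hm.trans_le (h x hx t ⟨ht.1, le_rfl⟩)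

theorem flow_antitoneOn {φ₀ g : ℝ → ℝ} {φ : ℝ → ℝ → ℝ} {Ts : ℝ}
    (hg : ∀ z ≥ (0:ℝ), gD g z ≤ 0)
    (hsol : IsFlowMapSolution φ₀ g φ (Set.Ico 0 Ts))
    (hinf : ∀ T' < Ts, PosInfOn φ (Set.Icc 0 T'))
    {x : ℝ} (hx : 0 ≤ x) : AntitoneOn (fun t => φ x t) (Set.Ico 0 Ts) := by
  have hd := hsol.2.2 x hx
  refine antitoneOn_of_hasDerivWithinAt_nonpos (convex_Ico 0 Ts)
    (fun t ht => (hd t ht).continuousWithinAt)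
    (fun t ht => (hd t (interior_subset ht)).mono interior_subset) ?_
  intro t ht
  have ht := interior_subset ht
  refine mul_nonpos_of_nonneg_of_nonpos (flow_pos hinf hx ht).le
    (setIntegral_nonpos measurableSet_Ioi fun z hz => ?_)
  have hz0 : 0 ≤ z := hx.trans (le_of_lt hz)
  exact div_nonpos_of_nonpos_of_nonneg (hg z hz0)
    (intervalIntegral.integral_nonneg hz0 fun σ hσ => (flow_pos hinf hσ.1 ht).le)

/-- The bootstrap bound, valid only up to the length `l t = (φ 0 t) ^ β`, reaches each `x > 0` at some
time: either `x` is at least `ε₀ ^ β` and `t = 0` serves, or `l` shrinks continuously through `x`. -/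
theorem exists_flow_le {ε₀ β κ Ts : ℝ} {g : ℝ → ℝ} {φ : ℝ → ℝ → ℝ}
    (hβ : 0 < β) (hκ : 1 < κ) (hTs : 0 < Ts)
    (hsol : IsFlowMapSolution (fun _ => ε₀) g φ (Set.Ico 0 Ts))
    (hboot : BootstrapB φ κ β (Set.Ico 0 Ts))
    (hlim : Tendsto (fun t => φ 0 t) (𝓝[<] Ts) (𝓝 0)) {x : ℝ} (hx : 0 < x) :
    ∃ t ∈ Set.Ico 0 Ts, φ x t ≤ κ * x ^ (1 / β) := by
  have hy : 0 < x ^ (1 / β) := Real.rpow_pos_of_pos hx _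
  rcases le_or_gt ε₀ (x ^ (1 / β)) with h | h
  · refine ⟨0, ⟨le_rfl, hTs⟩, ?_⟩
    rw [hsol.2.1 x hx.le]
    nlinarith
  · obtain ⟨s, hs1, hs⟩ :=
      ((hlim.eventually (gt_mem_nhds hy)).and (Ioo_mem_nhdsLT hTs)).exists
    have hcont : ContinuousOn (fun t => φ 0 t) (Set.Icc 0 s) := fun t ht =>
      ((hsol.2.2 0 le_rfl t ⟨ht.1, ht.2.trans_lt hs.2⟩).continuousWithinAt).mono
        fun u hu => ⟨hu.1, hu.2.trans_lt hs.2⟩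
    obtain ⟨t, ht, hte⟩ := intermediate_value_Icc' hs.1.le hcont
      (show x ^ (1 / β) ∈ Set.Icc (φ 0 s) (φ 0 0) from
        ⟨le_of_lt hs1, by rw [hsol.2.1 0 le_rfl]; exact h.le⟩)
    have ht' : t ∈ Set.Ico 0 Ts := ⟨ht.1, ht.2.trans_lt hs.2⟩
    refine ⟨t, ht', ?_⟩
    have hte' : φ 0 t = x ^ (1 / β) := hte
    have hl : (φ 0 t) ^ β = x := by
      rw [hte', ← Real.rpow_mul hx.le, one_div_mul_cancel hβ.ne', Real.rpow_one]
    have := hboot t ht' x ⟨hx.le, hl.ge⟩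
    rwa [hte'] at this

/-- from the conclusion of the proof of Theorem `blowupThm`: in the
bootstrap setup with `ε₀ ≤ κ ε₀^{1/β}`, for a solution on `[0,T_s)` satisfying (B) with
`ε(t) → 0` as `t → T_s`, the pointwise limits `φ(x,T_s)` exist for `x > 0` with
`φ(x,T_s) ≤ κ x^{1/β}`, and `Φ(z,T_s) = lim_{t→T_s} Φ(z,t)` exists for `z ≥ 0` with
`Φ(z,T_s) ≤ (κβ/(β+1)) z^{1/β+1}`. -/
theorem statement17 (ε₀ K₀ K₁ β κ Ts : ℝ) (g : ℝ → ℝ) (φ : ℝ → ℝ → ℝ)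
    (hB : BootstrapData ε₀ K₀ K₁ g)
    (hβ : β ∈ Set.Ioo (0:ℝ) 1) (hκ : 1 < κ)
    (hcond : ε₀ ≤ κ * ε₀ ^ (1 / β))
    (hTs : 0 < Ts)
    (hsol : IsFlowMapSolution (fun _ => ε₀) g φ (Set.Ico 0 Ts))
    (hinf : ∀ T' < Ts, PosInfOn φ (Set.Icc 0 T'))
    (hboot : BootstrapB φ κ β (Set.Ico 0 Ts))
    (hlim : Tendsto (fun t => φ 0 t) (𝓝[<] Ts) (𝓝 0)) :
    ∃ φs : ℝ → ℝ,
      (∀ x > (0:ℝ), Tendsto (fun t => φ x t) (𝓝[<] Ts) (𝓝 (φs x)) ∧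
        φs x ≤ κ * x ^ (1 / β)) ∧
      ∃ Φs : ℝ → ℝ, ∀ z ≥ (0:ℝ),
        Tendsto (fun t => Phi φ z t) (𝓝[<] Ts) (𝓝 (Φs z)) ∧
        Φs z ≤ κ * β / (β + 1) * z ^ (1 / β + 1) := by
  obtain ⟨-, -, -, -, -, -, hg, -⟩ := hB
  have hanti := fun {x : ℝ} (hx : 0 ≤ x) => flow_antitoneOn hg hsol hinf hx
  have hev : ∀ᶠ t in 𝓝[<] Ts, t ∈ Set.Ico 0 Ts :=
    mem_of_superset (Ioo_mem_nhdsLT hTs) Ioo_subset_Ico_self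
  have hT : ∀ x ≥ (0:ℝ),
      Tendsto (fun t => φ x t) (𝓝[<] Ts) (𝓝 (sInf ((fun t => φ x t) '' Set.Ioo 0 Ts))) := by
    intro x hx
    refine AntitoneOn.tendsto_nhdsWithin_Ioo_left (nonempty_Ioo.2 hTs)
      ((hanti hx).mono Ioo_subset_Ico_self) ⟨0, ?_⟩
    rintro _ ⟨t, ht, rfl⟩
    exact (flow_pos hinf hx (Ioo_subset_Ico_self ht)).le
  set φs : ℝ → ℝ := fun x => sInf ((fun t => φ x t) '' Set.Ioo 0 Ts)
  have hle : ∀ x > (0:ℝ), φs x ≤ κ * x ^ (1 / β) := by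
    intro x hx
    obtain ⟨s, hs, hsx⟩ := exists_flow_le hβ.1 hκ hTs hsol hboot hlim hx
    refine le_of_tendsto (hT x hx.le) ?_
    filter_upwards [hev, Ioo_mem_nhdsLT hs.2] with t ht hts
    exact (hanti hx.le hs ht hts.1.le).trans hsx
  have h0 : ∀ x ≥ (0:ℝ), 0 ≤ φs x := fun x hx =>
    ge_of_tendsto (hT x hx) (hev.mono fun t ht => (flow_pos hinf hx ht).le)
  refine ⟨φs, fun x hx => ⟨hT x hx.le, hle x hx⟩, fun z => ∫ σ in (0:ℝ)..z, φs σ,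
    fun z hz => ⟨?_, ?_⟩⟩
  · refine intervalIntegral.tendsto_integral_filter_of_dominated_convergence (fun _ => ε₀)
      ?_ ?_ intervalIntegrable_const ?_
    · filter_upwards [hev] with t ht
      rw [uIoc_of_le hz]
      refine ContinuousOn.aestronglyMeasurable ?_ measurableSet_Ioc
      exact hsol.1.continuousOn.comp (by fun_prop : Continuous fun x : ℝ => (x, t)).continuousOn
        fun x hx => ⟨hx.1.le, ht⟩
    · filter_upwards [hev] with t ht
      refine ae_of_all _ fun x hx => ?_
      rw [uIoc_of_le hz] at hx
      rw [Real.norm_of_nonneg (flow_pos hinf hx.1.le ht).le]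
      have := hanti hx.1.le ⟨le_rfl, hTs⟩ ht ht.1
      simpa only [hsol.2.1 x hx.1.le] using this
    · refine ae_of_all _ fun x hx => ?_
      rw [uIoc_of_le hz] at hx
      exact hT x hx.1.le
  · have hb : 0 < 1 / β := one_div_pos.2 hβ.1
    have hi : IntervalIntegrable (fun x : ℝ => κ * x ^ (1 / β)) volume 0 z :=
      (intervalIntegral.intervalIntegrable_rpow' (by linarith)).const_mul κ
    calc ∫ σ in (0:ℝ)..z, φs σ ≤ ∫ σ in (0:ℝ)..z, κ * σ ^ (1 / β) := by
          rw [intervalIntegral.integral_of_le hz, intervalIntegral.integral_of_le hz]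
          -- Only the dominating function needs to be integrable, as `φs` is nonnegative.
          refine integral_mono_of_nonneg ?_ hi.1 ?_
          · exact (ae_restrict_mem measurableSet_Ioc).mono fun x hx => h0 x hx.1.le
          · exact (ae_restrict_mem measurableSet_Ioc).mono fun x hx => hle x hx.1
      _ = κ * β / (β + 1) * z ^ (1 / β + 1) := by
          rw [intervalIntegral.integral_const_mul, integral_rpow (Or.inl (by linarith)),
            Real.zero_rpow (by linarith), sub_zero]
          have := hβ.1
          have h1 : 1 / β + 1 = (β + 1) / β := by field_simp; ring
          rw [h1]
          field_simp
end
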